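/- Let A := { t·(1, 3, 9) : t ∈ ℤ/14ℤ } ⊆ (ℤ/14ℤ)³. Then A is an independent set of cardinality 14 in C_{5,14}^{⊠3}, α(C_{5,14}^{⊠3}) = 14, and the maximum independent set is unique up to Lee equivalence: for every independent set B ⊆ (ℤ/14ℤ)³ in C_{5,14}^{⊠3} with |B| = 14 there exist a permutation σ of {1,2,3}, signs ε₁, ε₂, ε₃ ∈ {+1, −1} and constants c₁, c₂, c₃ ∈ ℤ/14ℤ such that B = { (ε₁·a_{σ(1)} + c₁, ε₂·a_{σ(2)} + c₂, ε₃·a_{σ(3)} + c₃) : a ∈ A }. -/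

import Mathlib

/-!
Every five consecutive residues are pairwise closer than `5`, so the points of an independent set
having one coordinate in such a window are separated by the remaining coordinates. Averaging over
all windows gives the bound `⌊14/5 ⌊14/5 ⌊14/5⌋⌋⌋ = 14`, and an independent set attaining it has
exactly five points over every window, hence one point over every value of every coordinate.

The other two coordinates are then functions `f` and `g` of the first, and any two of five
consecutive arguments are far apart under `f` or under `g`. Three residues are never pairwise far
apart, so being far under `f` two-colours the pairs of each window without a monochromatic triangle.
The only such colourings of a `5`-set are a pentagon and its complement; sliding the window shows
that the colour depends only on the difference of the two arguments. Up to exchanging `f` and `g`,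
`f` is therefore near at difference `1` and far at differences `2` and `3`, and comparing the sums
of two and of three consecutive increments forces every increment of `f` to be `3`, or every one
to be `-3`. Applying this successively to two coordinates gives the shape `t (1, 3, 9)`.
-/

/-- The circular (Lee) distance on `ℤ/qℤ`: `δ(x,y) = min(|x-y|, q-|x-y|)`,
with representatives taken in `{0,…,q-1}`. -/
def circDist (q : ℕ) (x y : ZMod q) : ℕ := min (x - y).val (y - x).val

/-- The code `A = { t·(1,3,9) : t ∈ ℤ/14ℤ } ⊆ (ℤ/14ℤ)³`. -/
def codeA : Finset (Fin 3 → ZMod 14) :=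
  Finset.image (fun t : ZMod 14 => ![t, 3 * t, 9 * t]) Finset.univ

open Finset

/-! ### Circular distance -/

section CircDist

variable {q d : ℕ}

theorem circDist_self (x : ZMod q) : circDist q x x = 0 := by
  simp [circDist]

theorem circDist_comm (x y : ZMod q) : circDist q x y = circDist q y x :=
  min_comm _ _

theorem circDist_neg_neg (x y : ZMod q) : circDist q (-x) (-y) = circDist q x y := by
  simp only [circDist, neg_sub_neg, min_comm]

theorem le_circDist_iff [NeZero q] (hd : 0 < d) {x y : ZMod q} :
    d ≤ circDist q x y ↔ d ≤ (y - x).val ∧ (y - x).val + d ≤ q := by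
  have hlt := (y - x).val_lt
  rw [circDist, ← neg_sub y x, ZMod.neg_val]
  split_ifs with h
  · simp only [h, ZMod.val_zero]
    omega
  · omega

theorem circDist_lt_of_le_circDist [NeZero q] (hq : q < 3 * d) {x y z : ZMod q}
    (hxy : d ≤ circDist q x y) (hyz : d ≤ circDist q y z) : circDist q x z < d := by
  have hd : 0 < d := by omega
  rw [← not_le]
  rw [le_circDist_iff hd] at hxy hyz ⊢
  rw [← sub_add_sub_cancel z y x, ZMod.val_add]
  rcases lt_or_ge ((z - y).val + (y - x).val) q with h | h
  · rw [Nat.mod_eq_of_lt h]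
    omega
  · rw [Nat.mod_eq_sub_mod h, Nat.mod_eq_of_lt (by omega)]
    omega

theorem circDist_add_natCast_lt {k l : ℕ} (hk : k < d) (hl : l < d) (w : ZMod q) :
    circDist q (w + k) (w + l) < d := by
  wlog hkl : k ≤ l generalizing k l
  · rw [circDist_comm]
    exact this hl hk (by omega)
  calc circDist q (w + k) (w + l) ≤ ((w + l) - (w + k)).val := min_le_right _ _
    _ = ((l - k : ℕ) : ZMod q).val := by rw [add_sub_add_left_eq_sub, Nat.cast_sub hkl]
    _ ≤ l - k := ZMod.val_natCast q (l - k) ▸ Nat.mod_le _ _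
    _ < d := by omega

end CircDist

/-! ### Periodic functions and windows -/

section Window

variable {q d : ℕ}

theorem apply_eq_of_periodic_of_isUnit {α : Type*} {f : ZMod q → α} {c : ZMod q}
    (hf : Function.Periodic f c) (hc : IsUnit c) (x y : ZMod q) : f x = f y := by
  have apply_eq_zero (x : ZMod q) : f x = f 0 := by
    obtain ⟨c, rfl⟩ := hc
    obtain ⟨n, hn⟩ := ZMod.intCast_surjective (x * (↑c⁻¹ : ZMod q))
    rw [← hf.int_mul_eq n, hn, Units.inv_mul_cancel_right]
  rw [apply_eq_zero x, apply_eq_zero y]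

theorem sum_apply_add_right [NeZero q] {M : Type*} [AddCommMonoid M] (n : ZMod q → M)
    (k : ZMod q) : ∑ t, n (t + k) = ∑ t, n t :=
  Equiv.sum_comp (Equiv.addRight k) n

/-- The `d` consecutive residues `w, w + 1, …, w + (d - 1)` modulo `q`. -/
def window (q d : ℕ) (w : ZMod q) : Finset (ZMod q) :=
  (range d).image fun k : ℕ => w + k

theorem mem_window {w x : ZMod q} : x ∈ window q d w ↔ ∃ k < d, w + k = x := by
  simp only [window, mem_image, mem_range]

theorem circDist_lt_of_mem_window {w x y : ZMod q} (hx : x ∈ window q d w)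
    (hy : y ∈ window q d w) : circDist q x y < d := by
  obtain ⟨k, hk, rfl⟩ := mem_window.mp hx
  obtain ⟨l, hl, rfl⟩ := mem_window.mp hy
  exact circDist_add_natCast_lt hk hl w

theorem window_succ (d : ℕ) (w : ZMod q) :
    window q (d + 1) w = insert (w + d) (window q d w) := by
  rw [window, range_add_one, image_insert, window]

theorem window_succ' (d : ℕ) (w : ZMod q) :
    window q (d + 1) w = insert w (window q d (w + 1)) := by
  rw [window, range_add_one', image_insert, Nat.cast_zero, add_zero, window, map_eq_image,
    image_image]
  congr 1
  refine image_congr fun k _ => ?_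
  change w + ((k + 1 : ℕ) : ZMod q) = w + 1 + k
  rw [Nat.cast_succ, add_assoc, add_comm (1 : ZMod q)]

theorem injOn_add_natCast (hd : d ≤ q) (w : ZMod q) :
    Set.InjOn (fun k : ℕ => w + (k : ZMod q)) (range d) := by
  intro k hk l hl hkl
  simp only [coe_range, Set.mem_Iio] at hk hl
  exact ((ZMod.natCast_eq_natCast_iff k l q).mp (add_left_cancel hkl)).eq_of_lt_of_lt
    (hk.trans_le hd) (hl.trans_le hd)

theorem card_window (hd : d ≤ q) (w : ZMod q) : #(window q d w) = d := by
  rw [window, card_image_of_injOn (injOn_add_natCast hd w), card_range]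

variable {M : Type*} [AddCommMonoid M]

theorem sum_window (hd : d ≤ q) (n : ZMod q → M) (w : ZMod q) :
    ∑ x ∈ window q d w, n x = ∑ k ∈ range d, n (w + k) :=
  sum_image (injOn_add_natCast hd w)

theorem sum_sum_window [NeZero q] (hd : d ≤ q) (n : ZMod q → M) :
    ∑ w, ∑ x ∈ window q d w, n x = d • ∑ x, n x := by
  simp only [sum_window hd]
  rw [sum_comm]
  simp only [sum_apply_add_right, sum_const, card_range]

theorem sum_window_add (hd : d ≤ q) (n : ZMod q → M) (w : ZMod q) :
    ∑ x ∈ window q d w, n x + n (w + d) = ∑ x ∈ window q d (w + 1), n x + n w := by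
  simp only [sum_window hd, add_assoc w 1, add_comm (1 : ZMod q)]
  rw [← sum_range_succ fun k : ℕ => n (w + k), sum_range_succ']
  simp only [Nat.cast_add, Nat.cast_one, Nat.cast_zero, add_zero]

end Window

/-! ### Independent sets in strong products of circular graphs -/

section Separated

variable {ι : Type*} {q d : ℕ} {T : Finset ι} {S : Finset (ι → ZMod q)} {i : ι}

/-- Distinct points of `S` are at circular distance at least `d` in some coordinate of `T`. For
`T = univ` these are the independent sets of the strong product of copies of `C_{d,q}`. -/
def SeparatedOn (d : ℕ) (T : Finset ι) (S : Finset (ι → ZMod q)) : Prop :=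
  ∀ u ∈ S, ∀ v ∈ S, u ≠ v → ∃ i ∈ T, d ≤ circDist q (u i) (v i)

/-- The points of `S` whose `i`-th coordinate lies in the window of length `d` at `w`. -/
def slab (d : ℕ) (S : Finset (ι → ZMod q)) (i : ι) (w : ZMod q) : Finset (ι → ZMod q) :=
  {u ∈ S | u i ∈ window q d w}

theorem card_slab (S : Finset (ι → ZMod q)) (i : ι) (w : ZMod q) :
    #(slab d S i w) = ∑ x ∈ window q d w, #{u ∈ S | u i = x} := by
  refine (card_eq_sum_card_fiberwise fun u hu => (mem_filter.mp hu).2).trans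
    (sum_congr rfl fun x hx => ?_)
  rw [filter_filter]
  congr 1
  exact filter_congr fun u _ => ⟨And.right, fun h => ⟨h ▸ hx, h⟩⟩

theorem sum_card_fiber [NeZero q] (S : Finset (ι → ZMod q)) (i : ι) :
    ∑ x, #{u ∈ S | u i = x} = #S :=
  (card_eq_sum_card_fiberwise fun _ _ => mem_coe.mpr (mem_univ _)).symm

theorem sum_card_slab [NeZero q] (hd : d ≤ q) (S : Finset (ι → ZMod q)) (i : ι) :
    ∑ w, #(slab d S i w) = d * #S := by
  simp only [card_slab]
  rw [sum_sum_window hd, sum_card_fiber, smul_eq_mul]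

theorem SeparatedOn.separatedOn_slab [DecidableEq ι] (hS : SeparatedOn d (insert i T) S)
    (w : ZMod q) : SeparatedOn d T (slab d S i w) := by
  intro u hu v hv huv
  obtain ⟨huS, huw⟩ := mem_filter.mp hu
  obtain ⟨hvS, hvw⟩ := mem_filter.mp hv
  obtain ⟨j, hj, hfar⟩ := hS u huS v hvS huv
  rcases mem_insert.mp hj with rfl | hjT
  · exact absurd hfar (circDist_lt_of_mem_window huw hvw).not_ge
  · exact ⟨j, hjT, hfar⟩

/-- The iterated floor bound `⌊q/d ⌊q/d ⋯ ⌊q/d⌋⌋⌋` with `n` factors on the independence number of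
the `n`-th strong power of `C_{d,q}`. -/
def floorBound (d q : ℕ) : ℕ → ℕ
  | 0 => 1
  | n + 1 => q * floorBound d q n / d

theorem SeparatedOn.card_le_floorBound [NeZero q] (hd : 0 < d) (hdq : d ≤ q)
    (hS : SeparatedOn d T S) : #S ≤ floorBound d q #T := by
  classical
  induction T using Finset.induction_on generalizing S with
  | empty =>
    refine card_le_one.mpr fun u hu v hv => ?_
    by_contra huv
    simpa only [notMem_empty, false_and, exists_false] using hS u hu v hv huv
  | insert i T hi ih =>
    rw [card_insert_of_notMem hi, floorBound, Nat.le_div_iff_mul_le hd]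
    calc #S * d = ∑ w, #(slab d S i w) := by rw [sum_card_slab hdq, mul_comm]
      _ ≤ ∑ _w : ZMod q, floorBound d q #T := sum_le_sum fun w _ => ih (hS.separatedOn_slab w)
      _ = q * floorBound d q #T := by rw [sum_const, card_univ, ZMod.card, smul_eq_mul]

theorem SeparatedOn.card_slab_eq_floorBound [NeZero q] [DecidableEq ι] (hd : 0 < d) (hdq : d ≤ q)
    (hS : SeparatedOn d (insert i T) S) (hcard : d * #S = q * floorBound d q #T) (w : ZMod q) :
    #(slab d S i w) = floorBound d q #T := by
  refine (sum_eq_sum_iff_of_le fun w _ => (hS.separatedOn_slab w).card_le_floorBound hd hdq).mp ?_ w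
    (mem_univ w)
  rw [sum_card_slab hdq, hcard, sum_const, card_univ, ZMod.card, smul_eq_mul]

theorem card_fiber_of_card_slab_eq [NeZero q] (hdq : d ≤ q) (hcop : d.Coprime q) {m : ℕ}
    (hslab : ∀ w, #(slab d S i w) = m) (x : ZMod q) : q * #{u ∈ S | u i = x} = #S := by
  have periodic : Function.Periodic (fun x => #{u ∈ S | u i = x}) (d : ZMod q) := fun w => by
    have h := sum_window_add hdq (fun x => #{u ∈ S | u i = x}) w
    rw [← card_slab, ← card_slab, hslab, hslab] at h
    exact add_left_cancel h
  have hunit : IsUnit (d : ZMod q) := (ZMod.isUnit_iff_coprime d q).mpr hcop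
  calc q * #{u ∈ S | u i = x} = ∑ _y : ZMod q, #{u ∈ S | u i = x} := by
        rw [sum_const, card_univ, ZMod.card, smul_eq_mul]
    _ = ∑ y, #{u ∈ S | u i = y} :=
        sum_congr rfl fun y _ => apply_eq_of_periodic_of_isUnit periodic hunit x y
    _ = #S := sum_card_fiber S i

end Separated

/-! ### Two-colourings without monochromatic triangles -/

section Ramsey

variable {V : Type*} {G : SimpleGraph V} {s : Finset V}

/-- Colouring the pairs in `s` by adjacency in `G` leaves no monochromatic triangle. -/
def NoMonoTriangle (G : SimpleGraph V) (s : Finset V) : Prop :=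
  G.CliqueFreeOn s 3 ∧ Gᶜ.CliqueFreeOn s 3

theorem NoMonoTriangle.compl (h : NoMonoTriangle G s) : NoMonoTriangle Gᶜ s :=
  ⟨h.2, (compl_compl G).symm ▸ h.1⟩

theorem NoMonoTriangle.adj_iff_not_adj (h : NoMonoTriangle G s) {a b c : V}
    (ha : a ∈ s) (hb : b ∈ s) (hc : c ∈ s) (hab : a ≠ b) (hac : a ≠ c)
    (hbc : b ≠ c) (heq : G.Adj a b ↔ G.Adj b c) : G.Adj a b ↔ ¬ G.Adj a c := by
  classical
  have hsub : (({a, b, c} : Finset V) : Set V) ⊆ s := by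
    simp [Set.insert_subset_iff, ha, hb, hc]
  have hG := mt SimpleGraph.is3Clique_triple_iff.mpr (h.1 hsub)
  have hGc := mt SimpleGraph.is3Clique_triple_iff.mpr (h.2 hsub)
  simp only [SimpleGraph.compl_adj] at hGc
  tauto

theorem NoMonoTriangle.card_adj_le_two [DecidableRel G.Adj] (h : NoMonoTriangle G s) {x : V}
    (hx : x ∈ s) : #{y ∈ s | G.Adj x y} ≤ 2 := by
  by_contra! hcard
  have hfree : G.CliqueFreeOn (s ∩ G.neighborSet x) 2 := h.1.of_succ (G := G) hx
  refine h.2.mono (G := Gᶜ) hcard (coe_subset.mpr (filter_subset _ s))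
    ⟨fun y hy z hz hyz => ⟨hyz, ?_⟩, rfl⟩
  obtain ⟨hys, hxy⟩ := mem_filter.mp hy
  obtain ⟨hzs, hxz⟩ := mem_filter.mp hz
  exact (SimpleGraph.cliqueFreeOn_two G).mp hfree ⟨hys, hxy⟩ ⟨hzs, hxz⟩ hyz

theorem NoMonoTriangle.card_adj_eq_two [DecidableRel G.Adj] (h : NoMonoTriangle G s) (hs : #s = 5)
    {x : V} (hx : x ∈ s) : #{y ∈ s | G.Adj x y} = 2 := by
  classical
  have hle := h.card_adj_le_two hx
  have hle_compl := h.compl.card_adj_le_two hx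
  have hcompl : ({y ∈ s | ¬ G.Adj x y} : Finset V) = insert x {y ∈ s | Gᶜ.Adj x y} := by
    ext y
    rcases eq_or_ne y x with rfl | hxy
    · simp [hx]
    · simp [hxy, hxy.symm]
  have hsplit : #{y ∈ s | G.Adj x y} + #{y ∈ s | ¬ G.Adj x y} = #s :=
    card_filter_add_card_filter_not _
  rw [hcompl, card_insert_of_notMem (by simp), hs] at hsplit
  omega

/-- In both `5`-sets the vertex `x` has two neighbours, and they share all vertices but one. -/
theorem NoMonoTriangle.adj_iff_of_insert [DecidableEq V] {a b x : V} (hs : #s = 4) (ha : a ∉ s)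
    (hb : b ∉ s) (hGa : NoMonoTriangle G (insert a s)) (hGb : NoMonoTriangle G (insert b s))
    (hx : x ∈ s) : G.Adj x a ↔ G.Adj x b := by
  classical
  have hda := hGa.card_adj_eq_two (by rw [card_insert_of_notMem ha, hs]) (mem_insert_of_mem hx)
  have hdb := hGb.card_adj_eq_two (by rw [card_insert_of_notMem hb, hs]) (mem_insert_of_mem hx)
  rw [filter_insert] at hda hdb
  by_cases hxa : G.Adj x a <;> by_cases hxb : G.Adj x b <;>
    simp_all [card_insert_of_notMem]

end Ramsey

/-! ### Sliding a window of length five -/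

section Sliding

variable {q : ℕ} {G : SimpleGraph (ZMod q)}

theorem adj_add_natCast_iff (hq : 5 < q) (h : ∀ t, NoMonoTriangle G (window q 5 t)) (t : ZMod q)
    {k l : ℕ} (hk : 0 < k) (hl : 0 < l) (hkl : k + l = 5) :
    G.Adj t (t + k) ↔ G.Adj (t + k) (t + k + l) := by
  have hmem : t + k ∈ window q 4 (t + 1) :=
    mem_window.mpr ⟨k - 1, by omega, by rw [Nat.cast_pred hk]; ring⟩
  have hleft : t ∉ window q 4 (t + 1) := fun ht => by
    have hcard := card_window hq.le t
    rw [window_succ', insert_eq_of_mem ht, card_window (by omega)] at hcard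
    omega
  have hright : t + 1 + (4 : ℕ) ∉ window q 4 (t + 1) := fun ht => by
    have hcard := card_window hq.le (t + 1)
    rw [window_succ, insert_eq_of_mem ht, card_window (by omega)] at hcard
    omega
  have hend : t + k + l = t + 1 + (4 : ℕ) := by
    rw [add_assoc, ← Nat.cast_add, hkl, add_assoc]
    norm_num
  rw [G.adj_comm, hend]
  exact NoMonoTriangle.adj_iff_of_insert (card_window (by omega) _) hleft hright
    (window_succ' 4 t ▸ h t) (window_succ 4 (t + 1) ▸ h (t + 1)) hmem

theorem adj_add_natCast_congr (hq : 5 < q) (hcop : Nat.Coprime 5 q)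
    (h : ∀ t, NoMonoTriangle G (window q 5 t)) {k : ℕ} (hk : 0 < k) (hk5 : k < 5)
    (s t : ZMod q) : G.Adj s (s + k) ↔ G.Adj t (t + k) := by
  have periodic : Function.Periodic (fun t => G.Adj t (t + k)) ((5 : ℕ) : ZMod q) := fun t => by
    have hfive : t + k + (5 - k : ℕ) = t + (5 : ℕ) := by
      rw [add_assoc, ← Nat.cast_add, Nat.add_sub_cancel' hk5.le]
    have hslide := adj_add_natCast_iff hq h (t + k) (k := 5 - k) (l := k)
      (by omega) hk (by omega)
    rw [hfive] at hslide
    have hslide' := adj_add_natCast_iff hq h t (k := k) (l := 5 - k) hk (by omega) (by omega)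
    rw [hfive] at hslide'
    exact propext (hslide'.trans hslide).symm
  exact iff_of_eq (apply_eq_of_periodic_of_isUnit periodic
    ((ZMod.isUnit_iff_coprime 5 q).mpr hcop) s t)

theorem adj_pattern (hq : 5 < q) (hcop : Nat.Coprime 5 q)
    (h : ∀ t, NoMonoTriangle G (window q 5 t)) :
    (∀ t, ¬ G.Adj t (t + 1) ∧ G.Adj t (t + 2) ∧ G.Adj t (t + 3)) ∨
      ∀ t, G.Adj t (t + 1) ∧ ¬ G.Adj t (t + 2) ∧ ¬ G.Adj t (t + 3) := by
  have h_one (t) : G.Adj t (t + 1) ↔ G.Adj 0 (0 + 1) := by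
    simpa only [Nat.cast_one] using adj_add_natCast_congr hq hcop h one_pos (by decide) t 0
  have h_two (t) : G.Adj t (t + 2) ↔ G.Adj 0 (0 + 2) := by
    simpa only [Nat.cast_ofNat] using adj_add_natCast_congr hq hcop h two_pos (by decide) t 0
  have h_three (t) : G.Adj t (t + 3) ↔ G.Adj 0 (0 + 2) := by
    have := adj_add_natCast_iff hq h t (k := 3) (l := 2) three_pos two_pos rfl
    simp only [Nat.cast_ofNat] at this
    exact this.trans (h_two _)
  have h_ne : G.Adj 0 (0 + 1) ↔ ¬ G.Adj 0 (0 + 2) := by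
    have hinj := injOn_add_natCast hq.le (0 : ZMod q)
    have hmem (k : ℕ) (hk : k < 5) : 0 + (k : ZMod q) ∈ window q 5 0 :=
      mem_window.mpr ⟨k, hk, rfl⟩
    have htwo : (0 : ZMod q) + 1 + 1 = 0 + 2 := by ring
    have := (h 0).adj_iff_not_adj (hmem 0 (by decide)) (hmem 1 (by decide)) (hmem 2 (by decide))
      (hinj.ne (by simp) (by simp) (by decide)) (hinj.ne (by simp) (by simp) (by decide))
      (hinj.ne (by simp) (by simp) (by decide))
    simp only [Nat.cast_zero, Nat.cast_one, Nat.cast_ofNat, add_zero] at this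
    exact this (htwo ▸ (h_one (0 + 1)).symm)
  simp only [h_one, h_two, h_three, h_ne, forall_const]
  tauto

end Sliding

/-! ### Pairs of functions that separate windows -/

section Far

variable {q d : ℕ}

/-- The complement of the circular graph `C_{d,q}`. -/
def farGraph (q d : ℕ) [NeZero d] : SimpleGraph (ZMod q) where
  Adj x y := d ≤ circDist q x y
  symm := ⟨fun x y h => circDist_comm x y ▸ h⟩
  loopless := ⟨fun x h => NeZero.ne d (Nat.le_zero.mp (circDist_self x ▸ h))⟩

theorem cliqueFree_comap_farGraph [NeZero q] [NeZero d] (hq : q < 3 * d) {V : Type*}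
    (f : V → ZMod q) : ((farGraph q d).comap f).CliqueFree 3 := by
  classical
  intro t ht
  obtain ⟨x, y, z, hxy, hxz, hyz, -⟩ := SimpleGraph.is3Clique_iff.mp ht
  exact (circDist_lt_of_le_circDist hq hxy hyz).not_ge hxz

theorem noMonoTriangle_comap_farGraph [NeZero q] [NeZero d] (hq : q < 3 * d) {V : Type*}
    {f g : V → ZMod q} {s : Finset V}
    (hfg : ∀ x ∈ s, ∀ y ∈ s, x ≠ y →
      d ≤ circDist q (f x) (f y) ∨ d ≤ circDist q (g x) (g y)) :
    NoMonoTriangle ((farGraph q d).comap f) s :=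
  ⟨(cliqueFree_comap_farGraph hq f).cliqueFreeOn, fun t hts ht =>
    cliqueFree_comap_farGraph hq g t ⟨fun x hx y hy hxy =>
      (hfg x (hts hx) y (hts hy) hxy).resolve_left (ht.1 hx hy hxy).2, ht.2⟩⟩

/-- `f` moves adjacent residues less than `5` apart, and residues at difference `2` or `3` at least
`5` apart: on five consecutive residues, the pairs it keeps close form a pentagon. -/
def NearFarFar (f : ZMod q → ZMod q) : Prop :=
  ∀ t, circDist q (f t) (f (t + 1)) < 5 ∧ 5 ≤ circDist q (f t) (f (t + 2)) ∧
    5 ≤ circDist q (f t) (f (t + 3))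

theorem nearFarFar_or_nearFarFar [NeZero q] (hq : 5 < q) (hq' : q < 15) (hcop : Nat.Coprime 5 q)
    {f g : ZMod q → ZMod q}
    (hfg : ∀ x y, x ≠ y → circDist q x y < 5 →
      5 ≤ circDist q (f x) (f y) ∨ 5 ≤ circDist q (g x) (g y)) :
    NearFarFar f ∨ NearFarFar g := by
  have hf := adj_pattern hq hcop fun t => noMonoTriangle_comap_farGraph (d := 5) hq'
    fun x hx y hy hxy => hfg x y hxy (circDist_lt_of_mem_window hx hy)
  have hg := adj_pattern hq hcop fun t => noMonoTriangle_comap_farGraph (d := 5) hq'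
    fun x hx y hy hxy => (hfg x y hxy (circDist_lt_of_mem_window (w := t) hx hy)).symm
  simp only [SimpleGraph.comap_adj, farGraph, not_le] at hf hg
  have htwo := hfg (0 + (0 : ℕ)) (0 + (2 : ℕ))
    ((injOn_add_natCast hq.le 0).ne (by simp) (by simp) (by decide))
    (circDist_add_natCast_lt (by decide) (by decide) 0)
  simp only [Nat.cast_zero, Nat.cast_ofNat, add_zero] at htwo
  rcases hf, hg with ⟨hf | hf, hg | hg⟩
  · exact .inl hf
  · exact .inl hf
  · exact .inr hg
  · exact absurd htwo (not_or.mpr ⟨(hf 0).2.1.not_ge, (hg 0).2.1.not_ge⟩)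

end Far

/-! ### Rigidity of the increments -/

section Rigidity

theorem eq_mul_add_of_forall_sub_eq {q : ℕ} {f : ZMod q → ZMod q} {a : ZMod q}
    (h : ∀ t, f (t + 1) - f t = a) (t : ZMod q) : f t = a * t + f 0 := by
  have periodic : Function.Periodic (fun t => f t - a * t) 1 := fun t => by
    linear_combination h t
  linear_combination apply_eq_of_periodic_of_isUnit periodic isUnit_one t 0

theorem sum_sub_eq_zero {q : ℕ} [NeZero q] (f : ZMod q → ZMod q) (k : ZMod q) :
    ∑ t, (f (t + k) - f t) = 0 := by
  rw [sum_sub_distrib, sum_apply_add_right, sub_self]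

/-- The mean of `n` is an integer between `5 / 2` and `9 / 3`, so it is `3`. -/
theorem eq_three_of_dvd_sum {q : ℕ} [NeZero q] (hcop : Nat.Coprime 3 q) {n : ZMod q → ℕ}
    (hdvd : q ∣ ∑ t, n t) (h_two : ∀ t, 5 ≤ n t + n (t + 1))
    (h_three : ∀ t, n t + n (t + 1) + n (t + 2) ≤ 9) (t : ZMod q) : n t = 3 := by
  have hq : 0 < q := NeZero.pos q
  obtain ⟨m, hm⟩ := hdvd
  have sum_two : ∑ t, (n t + n (t + 1)) = q * (2 * m) := by
    rw [sum_add_distrib, sum_apply_add_right, hm]; ring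
  have sum_three : ∑ t, (n t + n (t + 1) + n (t + 2)) = q * (3 * m) := by
    rw [sum_add_distrib, sum_add_distrib, sum_apply_add_right, sum_apply_add_right, hm]; ring
  have sum_const_eq (c : ℕ) : ∑ _t : ZMod q, c = q * c := by
    rw [sum_const, card_univ, ZMod.card, smul_eq_mul]
  have h_lower : 5 ≤ 2 * m := Nat.le_of_mul_le_mul_left
    (sum_const_eq 5 ▸ sum_two ▸ sum_le_sum fun t _ => h_two t) hq
  have h_upper : 3 * m ≤ 9 := Nat.le_of_mul_le_mul_left
    (sum_const_eq 9 ▸ sum_three ▸ sum_le_sum fun t _ => h_three t) hq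
  obtain rfl : m = 3 := by omega
  have h_nine (t) : n t + n (t + 1) + n (t + 2) = 9 :=
    (sum_eq_sum_iff_of_le fun t _ => h_three t).mp (sum_three.trans (sum_const_eq 9).symm) t
      (mem_univ t)
  have periodic : Function.Periodic n ((3 : ℕ) : ZMod q) := fun t => by
    have h := h_nine (t + 1)
    rw [show t + 1 + 1 = t + 2 by ring, show t + 1 + 2 = t + (3 : ℕ) by norm_num; ring] at h
    have := h_nine t
    omega
  have const := apply_eq_of_periodic_of_isUnit periodic ((ZMod.isUnit_iff_coprime 3 q).mpr hcop)
  have := h_nine t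
  rw [const (t + 1) t, const (t + 2) t] at this
  omega

variable {f : ZMod 14 → ZMod 14}

theorem NearFarFar.neg (hf : NearFarFar f) : NearFarFar (-f) := by
  simpa only [NearFarFar, Pi.neg_apply, circDist_neg_neg] using hf

theorem NearFarFar.val_sub_lt_iff (hf : NearFarFar f) (t : ZMod 14) :
    (f (t + 1 + 1) - f (t + 1)).val < 5 ↔ (f (t + 1) - f t).val < 5 := by
  have h_near := (hf t).1
  have h_near' := (hf (t + 1)).1
  have h_far := (hf t).2.1
  rw [show t + 2 = t + 1 + 1 by ring, le_circDist_iff (by decide),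
    ← sub_add_sub_cancel _ (f (t + 1)), ZMod.val_add] at h_far
  rw [← not_le, le_circDist_iff (by decide)] at h_near h_near'
  have := (f (t + 1) - f t).val_lt
  have := (f (t + 1 + 1) - f (t + 1)).val_lt
  omega

theorem NearFarFar.sub_eq_three (hf : NearFarFar f) (hpos : ∀ t, (f (t + 1) - f t).val < 5)
    (t : ZMod 14) : f (t + 1) - f t = 3 := by
  set n : ZMod 14 → ℕ := fun t => (f (t + 1) - f t).val
  have cast_n (t) : (n t : ZMod 14) = f (t + 1) - f t := ZMod.natCast_zmod_val _
  have h_dvd : 14 ∣ ∑ t, n t := by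
    rw [← ZMod.natCast_eq_zero_iff, Nat.cast_sum, sum_congr rfl fun t _ => cast_n t,
      sum_sub_eq_zero]
  have val_two (t) : (f (t + 2) - f t).val = n t + n (t + 1) := by
    have hsub : f (t + 2) - f t = (n t + n (t + 1) : ℕ) := by
      rw [Nat.cast_add, cast_n, cast_n, show t + 1 + 1 = t + 2 by ring]
      ring
    rw [hsub, ZMod.val_natCast_of_lt (by linarith [hpos t, hpos (t + 1)])]
  have val_three (t) : (f (t + 3) - f t).val = n t + n (t + 1) + n (t + 2) := by
    have hsub : f (t + 3) - f t = (n t + n (t + 1) + n (t + 2) : ℕ) := by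
      rw [Nat.cast_add, Nat.cast_add, cast_n, cast_n, cast_n, show t + 1 + 1 = t + 2 by ring,
        show t + 2 + 1 = t + 3 by ring]
      ring
    rw [hsub, ZMod.val_natCast_of_lt (by linarith [hpos t, hpos (t + 1), hpos (t + 2)])]
  have h_two (t) : 5 ≤ n t + n (t + 1) :=
    val_two t ▸ ((le_circDist_iff (by decide)).mp (hf t).2.1).1
  have h_three (t) : n t + n (t + 1) + n (t + 2) ≤ 9 :=
    val_three t ▸ Nat.le_of_add_le_add_right ((le_circDist_iff (by decide)).mp (hf t).2.2).2
  rw [← cast_n, eq_three_of_dvd_sum (by decide) h_dvd h_two h_three t, Nat.cast_ofNat]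

theorem NearFarFar.exists_eq_three_mul_add (hf : NearFarFar f) :
    ∃ ε c : ZMod 14, (ε = 1 ∨ ε = -1) ∧ ∀ t, f t = ε * (3 * t) + c := by
  have sign_const (t) : (f (t + 1) - f t).val < 5 ↔ (f (0 + 1) - f 0).val < 5 :=
    iff_of_eq (apply_eq_of_periodic_of_isUnit (f := fun t => (f (t + 1) - f t).val < 5)
      (fun t => propext (hf.val_sub_lt_iff t)) isUnit_one t 0)
  by_cases hpos : (f (0 + 1) - f 0).val < 5
  · have hstep := hf.sub_eq_three fun t => (sign_const t).mpr hpos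
    exact ⟨1, f 0, .inl rfl, fun t => by rw [one_mul, eq_mul_add_of_forall_sub_eq hstep t]⟩
  · have hneg (t) : ((-f) (t + 1) - (-f) t).val < 5 := by
      have h_near := (hf t).1
      rw [← not_le, le_circDist_iff (by decide)] at h_near
      have h_nonneg := mt (sign_const t).mp hpos
      have h_sub : (-f) (t + 1) - (-f) t = -(f (t + 1) - f t) := by
        simp only [Pi.neg_apply]
        ring
      rw [h_sub, ZMod.neg_val]
      split_ifs <;> omega
    have hstep := hf.neg.sub_eq_three hneg
    refine ⟨-1, f 0, .inr rfl, fun t => ?_⟩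
    have h := eq_mul_add_of_forall_sub_eq hstep t
    simp only [Pi.neg_apply] at h
    linear_combination -h

end Rigidity

/-! ### Maximum independent sets -/

section Maximum

/-- `B` is the image of `A` under a permutation of the coordinates followed by a map `x ↦ εx + c`,
with `ε = ±1`, in each coordinate. -/
def LeeEquiv {ι : Type*} [Fintype ι] [DecidableEq ι] {q : ℕ} (A B : Finset (ι → ZMod q)) : Prop :=
  ∃ (σ : Equiv.Perm ι) (ε c : ι → ZMod q), (∀ i, ε i = 1 ∨ ε i = -1) ∧
    B = A.image (fun a => fun i => ε i * a (σ i) + c i)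

/-- On `S`, the `j`-th coordinate is `±3` times the `i`-th one up to a constant. -/
def Triples {ι : Type*} {q : ℕ} (S : Finset (ι → ZMod q)) (i j : ι) : Prop :=
  ∃ ε c : ZMod q, (ε = 1 ∨ ε = -1) ∧ ∀ u ∈ S, u j = ε * (3 * u i) + c

theorem card_codeA : #codeA = 14 := by
  rw [codeA, card_image_of_injective _ fun s t h => congrFun h 0, card_univ, ZMod.card]

theorem separatedOn_codeA : SeparatedOn 5 univ codeA := by
  have far_of_ne : ∀ s t : ZMod 14, s ≠ t →
      ∃ i, 5 ≤ circDist 14 (![s, 3 * s, 9 * s] i) (![t, 3 * t, 9 * t] i) := by decide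
  simp only [SeparatedOn, codeA, mem_image, mem_univ, true_and]
  rintro _ ⟨s, rfl⟩ _ ⟨t, rfl⟩ hst
  exact far_of_ne s t fun h => hst (h ▸ rfl)

variable {S : Finset (Fin 3 → ZMod 14)}

theorem SeparatedOn.card_le_fourteen (hS : SeparatedOn 5 univ S) : #S ≤ 14 :=
  hS.card_le_floorBound (by decide) (by decide)

theorem SeparatedOn.card_fiber_eq_one (hS : SeparatedOn 5 univ S) (hcard : #S = 14) (i : Fin 3)
    (x : ZMod 14) : #{u ∈ S | u i = x} = 1 := by
  have hins : insert i ({i}ᶜ : Finset (Fin 3)) = univ := by rw [insert_compl_self]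
  have hbound : floorBound 5 14 #({i}ᶜ : Finset (Fin 3)) = 5 := by
    rw [card_compl, card_singleton, Fintype.card_fin]
    rfl
  have hslab := SeparatedOn.card_slab_eq_floorBound (by decide) (by decide) (hins.symm ▸ hS)
    (by rw [hcard, hbound])
  have := card_fiber_of_card_slab_eq (by decide) (by decide) hslab x
  omega

theorem SeparatedOn.exists_mem_apply_eq (hS : SeparatedOn 5 univ S) (hcard : #S = 14) (i : Fin 3)
    (x : ZMod 14) : ∃ u ∈ S, u i = x := by
  obtain ⟨u, hu⟩ := card_pos.mp (hS.card_fiber_eq_one hcard i x ▸ one_pos)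
  exact ⟨u, mem_filter.mp hu⟩

theorem SeparatedOn.injOn_apply (hS : SeparatedOn 5 univ S) (hcard : #S = 14) (i : Fin 3) :
    Set.InjOn (fun u => u i) (S : Set (Fin 3 → ZMod 14)) := fun u hu v hv huv =>
  card_le_one.mp (hS.card_fiber_eq_one hcard i (v i)).le u (mem_filter.mpr ⟨hu, huv⟩) v
    (mem_filter.mpr ⟨hv, rfl⟩)

theorem SeparatedOn.triples_or_triples (hS : SeparatedOn 5 univ S) (hcard : #S = 14)
    {i j k : Fin 3} (hijk : ∀ l, l = i ∨ l = j ∨ l = k) : Triples S i j ∨ Triples S i k := by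
  choose W hWS hWi using hS.exists_mem_apply_eq hcard i
  have W_apply {u} (hu : u ∈ S) : W (u i) = u := hS.injOn_apply hcard i (hWS _) hu (hWi _)
  have h_far (x y : ZMod 14) (hxy : x ≠ y) (h_near : circDist 14 x y < 5) :
      5 ≤ circDist 14 (W x j) (W y j) ∨ 5 ≤ circDist 14 (W x k) (W y k) := by
    have hne : W x ≠ W y := fun h => hxy (by rw [← hWi x, h, hWi])
    obtain ⟨l, -, hl⟩ := hS _ (hWS x) _ (hWS y) hne
    rcases hijk l with rfl | rfl | rfl
    · rw [hWi, hWi] at hl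
      exact absurd hl h_near.not_ge
    · exact .inl hl
    · exact .inr hl
  have triples {l} (hl : NearFarFar fun t => W t l) : Triples S i l := by
    obtain ⟨ε, c, hε, h⟩ := hl.exists_eq_three_mul_add
    exact ⟨ε, c, hε, fun u hu => by rw [← h, W_apply hu]⟩
  exact (nearFarFar_or_nearFarFar (by decide) (by decide) (by decide) h_far).imp triples triples

theorem SeparatedOn.not_triples_symm (hS : SeparatedOn 5 univ S) (hcard : #S = 14) {i j : Fin 3}
    (hij : Triples S i j) : ¬ Triples S j i := by
  rintro ⟨ε', c', hε', h'⟩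
  obtain ⟨ε, c, hε, h⟩ := hij
  obtain ⟨u, hu, hui⟩ := hS.exists_mem_apply_eq hcard i 0
  obtain ⟨v, hv, hvi⟩ := hS.exists_mem_apply_eq hcard i 1
  have h_nine : ε' * ε * 9 = 1 := by
    have hu' := h' u hu
    have hv' := h' v hv
    rw [h u hu, hui] at hu'
    rw [h v hv, hvi] at hv'
    linear_combination hu' - hv'
  rcases hε with rfl | rfl <;> rcases hε' with rfl | rfl <;> exact absurd h_nine (by decide)

theorem leeEquiv_codeA_of_triples (hcard : #S = 14) (σ : Equiv.Perm (Fin 3))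
    (h₁ : Triples S (σ 0) (σ 1)) (h₂ : Triples S (σ 1) (σ 2)) : LeeEquiv codeA S := by
  obtain ⟨ε₁, c₁, hε₁, h₁⟩ := h₁
  obtain ⟨ε₂, c₂, hε₂, h₂⟩ := h₂
  let ε : Fin 3 → ZMod 14 := ![1, ε₁, ε₂ * ε₁]
  let c : Fin 3 → ZMod 14 := ![0, c₁, ε₂ * (3 * c₁) + c₂]
  have hε (m) : ε m = 1 ∨ ε m = -1 := by
    fin_cases m
    · exact .inl rfl
    · exact hε₁
    · rcases hε₁ with rfl | rfl <;> rcases hε₂ with rfl | rfl <;> simp [ε]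
  have apply_σ {u} (hu : u ∈ S) (m : Fin 3) :
      u (σ m) = ε m * ![u (σ 0), 3 * u (σ 0), 9 * u (σ 0)] m + c m := by
    fin_cases m
    · simp [ε, c]
    · simpa [ε, c] using h₁ u hu
    · simp only [ε, c, Fin.reduceFinMk, Matrix.cons_val]
      rw [h₂ u hu, h₁ u hu]
      ring
  have hsub : S ⊆ codeA.image (fun a => fun i => ε (σ.symm i) * a (σ.symm i) + c (σ.symm i)) := by
    intro u hu
    refine mem_image.mpr ⟨_, mem_image_of_mem _ (mem_univ (u (σ 0))), funext fun i => ?_⟩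
    rw [← apply_σ hu, σ.apply_symm_apply]
  exact ⟨σ.symm, ε ∘ σ.symm, c ∘ σ.symm, fun i => hε _,
    eq_of_subset_of_card_le hsub (card_image_le.trans (by rw [card_codeA, hcard]))⟩

theorem SeparatedOn.leeEquiv_codeA (hS : SeparatedOn 5 univ S) (hcard : #S = 14) :
    LeeEquiv codeA S := by
  rcases hS.triples_or_triples hcard (i := 0) (j := 1) (k := 2) (by decide) with h | h
  · have h' := (hS.triples_or_triples hcard (i := 1) (j := 0) (k := 2) (by decide)).resolve_left
      (hS.not_triples_symm hcard h)
    exact leeEquiv_codeA_of_triples hcard 1 h h'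
  · have h' := (hS.triples_or_triples hcard (i := 2) (j := 0) (k := 1) (by decide)).resolve_left
      (hS.not_triples_symm hcard h)
    exact leeEquiv_codeA_of_triples hcard (Equiv.swap 1 2) h h'

end Maximum

/-- `A = { t·(1,3,9) : t ∈ ℤ/14ℤ }` is an independent set of cardinality 14 in
`C_{5,14}^{⊠3}`, `α(C_{5,14}^{⊠3}) = 14`, and any independent set `B` of
cardinality 14 in `C_{5,14}^{⊠3}` is Lee equivalent to `A`: it is obtained from
`A` by permuting the three coordinates and applying, in each coordinate, a map
`x ↦ εx + c` with `ε ∈ {+1,-1}` and `c ∈ ℤ/14ℤ`. -/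
theorem unique_independent_set_C_5_14 :
    (∀ u ∈ codeA, ∀ v ∈ codeA, u ≠ v → ∃ i : Fin 3, 5 ≤ circDist 14 (u i) (v i))
    ∧ codeA.card = 14
    ∧ (∀ S : Finset (Fin 3 → ZMod 14),
        (∀ u ∈ S, ∀ v ∈ S, u ≠ v → ∃ i : Fin 3, 5 ≤ circDist 14 (u i) (v i)) →
        S.card ≤ 14)
    ∧ (∀ B : Finset (Fin 3 → ZMod 14),
        (∀ u ∈ B, ∀ v ∈ B, u ≠ v → ∃ i : Fin 3, 5 ≤ circDist 14 (u i) (v i)) →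
        B.card = 14 →
        ∃ (σ : Equiv.Perm (Fin 3)) (ε c : Fin 3 → ZMod 14),
          (∀ i, ε i = 1 ∨ ε i = -1) ∧
          B = codeA.image (fun a => fun i => ε i * a (σ i) + c i)) := by
  have separatedOn {S : Finset (Fin 3 → ZMod 14)}
      (hS : ∀ u ∈ S, ∀ v ∈ S, u ≠ v → ∃ i : Fin 3, 5 ≤ circDist 14 (u i) (v i)) :
      SeparatedOn 5 univ S := by simpa only [SeparatedOn, mem_univ, true_and] using hS
  refine ⟨?_, card_codeA, fun S hS => (separatedOn hS).card_le_fourteen,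
    fun B hB hcard => (separatedOn hB).leeEquiv_codeA hcard⟩
  simpa only [SeparatedOn, mem_univ, true_and] using separatedOn_codeA
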